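/- Fix real parameters t, γ with 0 < γ < t and fix ε > 0. Then there exist constants κ > 0 and C > 0 such that for all integers n, all m with nε ≤ m < n, and all k ≥ 0, one has h_k = h_k^M e^{r_k} with |r_k| ≤ C e^{−κ n}; equivalently, | h_k / h_k^M − 1 | ≤ C' e^{−4γ(m+1)} for some constant C' > 0 depending only on γ and ε. -/

import Mathlib

open scoped Classical

namespace SixVertex

/-- The discrete weight `w(x) = (e^{-2(t-γ)(x+m+1)} - e^{-2(t+γ)(x+m+1)}) ∏_{k=1}^m (x+k)`
on the nonnegative integers. -/
noncomputable def wfun (t γ : ℝ) (m : ℕ) (x : ℕ) : ℝ :=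
  (Real.exp (-2 * (t - γ) * ((x : ℝ) + m + 1)) - Real.exp (-2 * (t + γ) * ((x : ℝ) + m + 1)))
    * ∏ k ∈ Finset.Icc 1 m, ((x : ℝ) + k)

/-- The Meixner weight `w^M(x) = e^{-2(t-γ)(x+m+1)} ∏_{k=1}^m (x+k)` on the
nonnegative integers. -/
noncomputable def wM (t γ : ℝ) (m : ℕ) (x : ℕ) : ℝ :=
  Real.exp (-2 * (t - γ) * ((x : ℝ) + m + 1)) * ∏ k ∈ Finset.Icc 1 m, ((x : ℝ) + k)

/-- `IsMonicOPS w p h` says that `(p k)` is the system of monic orthogonal polynomials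
on the nonnegative integers for the discrete weight `w`, with normalizing constants
`h k > 0`: each `p k` is monic of degree `k` and
`Σ_{x=0}^∞ p j (x) p k (x) w(x) = h k δ_{jk}` (the sums converging absolutely). -/
def IsMonicOPS (w : ℕ → ℝ) (p : ℕ → Polynomial ℝ) (h : ℕ → ℝ) : Prop :=
  (∀ k, (p k).Monic ∧ (p k).natDegree = k) ∧ (∀ k, 0 < h k) ∧
    ∀ j k, HasSum (fun x : ℕ => (p j).eval (x : ℝ) * (p k).eval (x : ℝ) * w x)
      (if j = k then h k else 0)

/-! `h_k` is the minimum of `∑ q(x)² w(x)` over monic `q` of degree `k`, so it is monotone in the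
weight `w`. Since `w / w^M = 1 - e^{-4γ(x+m+1)}` lies in `[1 - e^{-4γ(m+1)}, 1]` for every `x ≥ 0`,
so does `h_k / h_k^M`, uniformly in `k`. -/

open Polynomial Real

namespace IsMonicOPS

variable {v w : ℕ → ℝ} {p q : ℕ → ℝ[X]} {h g : ℕ → ℝ}

lemma monic (H : IsMonicOPS w p h) (k : ℕ) : (p k).Monic := (H.1 k).1

lemma natDegree_eq (H : IsMonicOPS w p h) (k : ℕ) : (p k).natDegree = k := (H.1 k).2

lemma degree_eq (H : IsMonicOPS w p h) (k : ℕ) : (p k).degree = k := by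
  rw [degree_eq_natDegree (H.monic k).ne_zero, H.natDegree_eq]

lemma norm_pos (H : IsMonicOPS w p h) (k : ℕ) : 0 < h k := H.2.1 k

lemma hasSum_mul_of_ne (H : IsMonicOPS w p h) {j k : ℕ} (hjk : j ≠ k) :
    HasSum (fun x : ℕ => (p j).eval (x : ℝ) * (p k).eval (x : ℝ) * w x) 0 := by
  simpa only [if_neg hjk] using H.2.2 j k

lemma hasSum_mul_self (H : IsMonicOPS w p h) (k : ℕ) :
    HasSum (fun x : ℕ => (p k).eval (x : ℝ) * (p k).eval (x : ℝ) * w x) (h k) := by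
  simpa only [if_true] using H.2.2 k k

lemma span_eq_degreeLT (H : IsMonicOPS w p h) (k : ℕ) :
    Submodule.span ℝ (p '' Set.Iio k) = degreeLT ℝ k :=
  Sequence.span_degreeLT ⟨p, H.degree_eq⟩ fun i _ => (H.monic i).symm ▸ isUnit_one

lemma hasSum_mul_of_degree_lt (H : IsMonicOPS w p h) {k : ℕ} {s : ℝ[X]} (hs : s.degree < k) :
    HasSum (fun x : ℕ => (p k).eval (x : ℝ) * s.eval (x : ℝ) * w x) 0 := by
  rw [← mem_degreeLT, ← H.span_eq_degreeLT k] at hs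
  induction hs using Submodule.span_induction with
  | mem s hs =>
    obtain ⟨j, hj, rfl⟩ := hs
    exact H.hasSum_mul_of_ne (ne_of_gt hj)
  | zero => simpa only [eval_zero, mul_zero, zero_mul] using hasSum_zero
  | add s₁ s₂ _ _ h₁ h₂ => simpa only [eval_add, mul_add, add_mul, add_zero] using h₁.add h₂
  | smul c s _ hs =>
    simpa only [eval_smul, smul_eq_mul, mul_zero, mul_assoc, mul_left_comm c] using hs.mul_left c

/-- Pythagoras: `q = p k + (q - p k)` with `q - p k` of degree `< k`, hence orthogonal to `p k`. -/
lemma hasSum_sub_sq (H : IsMonicOPS w p h) {k : ℕ} {q : ℝ[X]} (hq : q.Monic)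
    (hqk : q.natDegree = k) {A : ℝ}
    (hA : HasSum (fun x : ℕ => q.eval (x : ℝ) * q.eval (x : ℝ) * w x) A) :
    HasSum (fun x : ℕ => (q.eval (x : ℝ) - (p k).eval (x : ℝ)) ^ 2 * w x) (A - h k) := by
  have degree_q : q.degree = k := by rw [degree_eq_natDegree hq.ne_zero, hqk]
  have degree_sub : (q - p k).degree < k := degree_q ▸
    degree_sub_lt_left (degree_q.trans (H.degree_eq k).symm) hq.ne_zero
      (hq.leadingCoeff.trans (H.monic k).leadingCoeff.symm)
  have hcross := (H.hasSum_mul_of_degree_lt degree_sub).mul_left 2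
  rw [mul_zero] at hcross
  rw [← sub_zero (A - h k)]
  refine ((hA.sub (H.hasSum_mul_self k)).sub hcross).congr_fun fun x => ?_
  rw [eval_sub]
  ring

lemma norm_le_of_hasSum (H : IsMonicOPS w p h) (hw : ∀ x, 0 ≤ w x) {k : ℕ} {q : ℝ[X]}
    (hq : q.Monic) (hqk : q.natDegree = k) {A : ℝ}
    (hA : HasSum (fun x : ℕ => q.eval (x : ℝ) * q.eval (x : ℝ) * w x) A) : h k ≤ A :=
  sub_nonneg.mp <| (H.hasSum_sub_sq hq hqk hA).nonneg fun x => mul_nonneg (sq_nonneg _) (hw x)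

lemma norm_le_mul_norm (Hv : IsMonicOPS v p h) (Hw : IsMonicOPS w q g) (hv : ∀ x, 0 ≤ v x)
    {c : ℝ} (hvw : ∀ x, v x ≤ c * w x) (k : ℕ) : h k ≤ c * g k := by
  have hg := (Hw.hasSum_mul_self k).mul_left c
  have hle (x : ℕ) : (q k).eval (x : ℝ) * (q k).eval (x : ℝ) * v x ≤
      c * ((q k).eval (x : ℝ) * (q k).eval (x : ℝ) * w x) := by
    rw [mul_left_comm]
    exact mul_le_mul_of_nonneg_left (hvw x) (mul_self_nonneg _)
  have hsum : Summable fun x : ℕ => (q k).eval (x : ℝ) * (q k).eval (x : ℝ) * v x :=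
    hg.summable.of_nonneg_of_le (fun x => mul_nonneg (mul_self_nonneg _) (hv x)) hle
  calc h k ≤ ∑' x : ℕ, (q k).eval (x : ℝ) * (q k).eval (x : ℝ) * v x :=
        Hv.norm_le_of_hasSum hv (Hw.monic k) (Hw.natDegree_eq k) hsum.hasSum
    _ ≤ c * g k := hasSum_le hle hsum.hasSum hg

lemma norm_div_norm_mem_Icc (Hv : IsMonicOPS v p h) (Hw : IsMonicOPS w q g) (hw : ∀ x, 0 ≤ w x)
    {a b : ℝ} (ha : 0 < a) (hav : ∀ x, a * w x ≤ v x) (hvb : ∀ x, v x ≤ b * w x) (k : ℕ) :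
    h k / g k ∈ Set.Icc a b := by
  have hv (x : ℕ) : 0 ≤ v x := (mul_nonneg ha.le (hw x)).trans (hav x)
  have hle : g k ≤ a⁻¹ * h k :=
    Hw.norm_le_mul_norm Hv hw (fun x => (le_inv_mul_iff₀ ha).mpr (hav x)) k
  exact ⟨(le_div_iff₀ (Hw.norm_pos k)).mpr ((le_inv_mul_iff₀ ha).mp hle),
    (div_le_iff₀ (Hw.norm_pos k)).mpr (Hv.norm_le_mul_norm Hw hv hvb k)⟩

end IsMonicOPS

lemma wM_nonneg (t γ : ℝ) (m x : ℕ) : 0 ≤ wM t γ m x := by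
  unfold wM
  positivity

lemma wfun_eq_mul_wM (t γ : ℝ) (m x : ℕ) :
    wfun t γ m x = (1 - exp (-4 * γ * ((x : ℝ) + m + 1))) * wM t γ m x := by
  have hexp : exp (-2 * (t + γ) * ((x : ℝ) + m + 1)) =
      exp (-4 * γ * ((x : ℝ) + m + 1)) * exp (-2 * (t - γ) * ((x : ℝ) + m + 1)) := by
    rw [← exp_add]
    ring_nf
  rw [wfun, wM, hexp]
  ring

lemma wfun_le_wM (t γ : ℝ) (m x : ℕ) : wfun t γ m x ≤ wM t γ m x := by
  rw [wfun_eq_mul_wM]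
  exact mul_le_of_le_one_left (wM_nonneg t γ m x) (sub_le_self 1 (exp_pos _).le)

lemma one_sub_exp_mul_wM_le_wfun (t : ℝ) {γ : ℝ} (hγ : 0 ≤ γ) (m x : ℕ) :
    (1 - exp (-4 * γ * ((m : ℝ) + 1))) * wM t γ m x ≤ wfun t γ m x := by
  rw [wfun_eq_mul_wM]
  refine mul_le_mul_of_nonneg_right (sub_le_sub_left (exp_le_exp.mpr ?_) 1) (wM_nonneg t γ m x)
  exact mul_le_mul_of_nonpos_left (by linarith [x.cast_nonneg (α := ℝ)]) (by linarith)

lemma norm_div_meixner_norm_mem_Icc {t γ : ℝ} (hγ : 0 < γ) {m : ℕ} {p pM : ℕ → ℝ[X]}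
    {h hM : ℕ → ℝ} (H : IsMonicOPS (wfun t γ m) p h) (HM : IsMonicOPS (wM t γ m) pM hM) (k : ℕ) :
    h k / hM k ∈ Set.Icc (1 - exp (-4 * γ * ((m : ℝ) + 1))) 1 := by
  have hpos : 0 < 1 - exp (-4 * γ * ((m : ℝ) + 1)) :=
    sub_pos.mpr (exp_lt_one_iff.mpr (mul_neg_of_neg_of_pos (by linarith) m.cast_add_one_pos))
  refine H.norm_div_norm_mem_Icc HM (wM_nonneg t γ m) hpos
    (one_sub_exp_mul_wM_le_wfun t hγ.le m) (fun x => ?_) k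
  rw [one_mul]
  exact wfun_le_wM t γ m x

lemma abs_log_le_inv_mul_of_mem_Icc {y δ δ₀ : ℝ} (hy : y ∈ Set.Icc (1 - δ) 1) (hδ : δ ≤ δ₀)
    (hδ₀ : δ₀ < 1) : |log y| ≤ (1 - δ₀)⁻¹ * δ := by
  obtain ⟨hδy, hy1⟩ := hy
  have hy0 : 0 < y := by linarith
  calc |log y| = -log y := abs_of_nonpos (log_nonpos hy0.le hy1)
    _ ≤ y⁻¹ - 1 := by linarith [one_sub_inv_le_log_of_pos hy0]
    _ = y⁻¹ * (1 - y) := by rw [mul_sub, mul_one, inv_mul_cancel₀ hy0.ne']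
    _ ≤ (1 - δ₀)⁻¹ * δ :=
      mul_le_mul (inv_anti₀ (by linarith) (by linarith)) (by linarith) (by linarith)
        (inv_nonneg.mpr (by linarith))

theorem norm_ratio_asymptotics_large_m_general {t γ ε n : ℝ} (hγ : 0 < γ) {m : ℕ}
    (hnm : n * ε ≤ m) {p pM : ℕ → ℝ[X]} {h hM : ℕ → ℝ} (H : IsMonicOPS (wfun t γ m) p h)
    (HM : IsMonicOPS (wM t γ m) pM hM) (k : ℕ) :
    (∃ r : ℝ, h k = hM k * exp r ∧ |r| ≤ (1 - exp (-4 * γ))⁻¹ * exp (-(4 * γ * ε) * n)) ∧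
      |h k / hM k - 1| ≤ exp (-4 * γ * ((m : ℝ) + 1)) := by
  have hratio := norm_div_meixner_norm_mem_Icc hγ H HM k
  have hexp : exp (-4 * γ) < 1 := exp_lt_one_iff.mpr (by linarith)
  have hexp_le : exp (-4 * γ * ((m : ℝ) + 1)) ≤ exp (-4 * γ) :=
    exp_le_exp.mpr (by nlinarith [m.cast_nonneg (α := ℝ)])
  refine ⟨⟨log (h k / hM k), ?_, ?_⟩, ?_⟩
  · rw [exp_log (div_pos (H.norm_pos k) (HM.norm_pos k)), mul_div_cancel₀ _ (HM.norm_pos k).ne']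
  · calc |log (h k / hM k)| ≤ (1 - exp (-4 * γ))⁻¹ * exp (-4 * γ * ((m : ℝ) + 1)) :=
          abs_log_le_inv_mul_of_mem_Icc hratio hexp_le hexp
      _ ≤ (1 - exp (-4 * γ))⁻¹ * exp (-(4 * γ * ε) * n) :=
          mul_le_mul_of_nonneg_left (exp_le_exp.mpr (by nlinarith))
            (inv_nonneg.mpr (sub_nonneg.mpr hexp.le))
  · rw [abs_sub_comm, abs_of_nonneg (sub_nonneg.mpr hratio.2)]
    linarith [hratio.1]

/-- For `nε ≤ m < n`, `h_k = h_k^M e^{r_k}` with `|r_k| ≤ C e^{-κn}`, uniformly in `m`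
and `k`; equivalently `|h_k/h_k^M - 1| ≤ C' e^{-4γ(m+1)}`. -/
theorem norm_ratio_asymptotics_large_m (t γ ε : ℝ) (hγ : 0 < γ) (ht : γ < t)
    (hε : 0 < ε) :
    ∃ κ > (0 : ℝ), ∃ C > (0 : ℝ), ∃ C' > (0 : ℝ), ∀ n m : ℕ,
      (n : ℝ) * ε ≤ (m : ℝ) → m < n →
      ∀ (p pM : ℕ → Polynomial ℝ) (h hM : ℕ → ℝ),
        IsMonicOPS (wfun t γ m) p h → IsMonicOPS (wM t γ m) pM hM → ∀ k : ℕ,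
          (∃ r : ℝ, h k = hM k * Real.exp r ∧ |r| ≤ C * Real.exp (-κ * n)) ∧
            |h k / hM k - 1| ≤ C' * Real.exp (-4 * γ * ((m : ℝ) + 1)) := by
  have hexp : exp (-4 * γ) < 1 := exp_lt_one_iff.mpr (by linarith)
  exact ⟨4 * γ * ε, by positivity, _, inv_pos.mpr (sub_pos.mpr hexp), 1, one_pos,
    fun n m hnm _ p pM h hM H HM k => by
      simpa only [one_mul] using norm_ratio_asymptotics_large_m_general hγ hnm H HM k⟩

end SixVertex
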